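/- Let F > 0. Define the standard normal pdf φ(x) = exp(−x²/2)/√(2π) and cdf N(x) = ∫_{−∞}^x φ(u) du. For k ∈ ℝ and w > 0 set d₊(k,w) = −k/√w + √w/2, d₋(k,w) = −k/√w − √w/2, and C_BS(k,w) = F·(N(d₊(k,w)) − exp(k)·N(d₋(k,w))). Let w : ℝ → ℝ be twice differentiable with w(k) > 0 for all k, and define g(k) := (1 − k·w′(k)/(2·w(k)))² − (w′(k)²/4)·(1/w(k) + 1/4) + w″(k)/2 and the strike-parametrized call Ĉ(K) := C_BS(log(K/F), w(log(K/F))) for K > 0. Then Ĉ is twice differentiable on (0,∞) and for every K > 0, with k := log(K/F), Ĉ″(K) = (F·φ(d₊(k,w(k))) / (K²·√(w(k))))·g(k). -/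

import Mathlib

open MeasureTheory

/-- Standard normal pdf. -/
noncomputable def gauss (x : ℝ) : ℝ := Real.exp (-x ^ 2 / 2) / Real.sqrt (2 * Real.pi)

/-- Standard normal cdf. -/
noncomputable def normCdf (x : ℝ) : ℝ := ∫ u in Set.Iic x, gauss u

/-- Black–Scholes `d₊` in log-moneyness `k` and total variance `w`. -/
noncomputable def dplus (k w : ℝ) : ℝ := -k / Real.sqrt w + Real.sqrt w / 2

/-- Black–Scholes `d₋` in log-moneyness `k` and total variance `w`. -/
noncomputable def dminus (k w : ℝ) : ℝ := -k / Real.sqrt w - Real.sqrt w / 2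

/-- Undiscounted forward Black–Scholes call price. -/
noncomputable def CBS (F k w : ℝ) : ℝ :=
  F * (normCdf (dplus k w) - Real.exp k * normCdf (dminus k w))

lemma gauss_hasDerivAt (x : ℝ) : HasDerivAt gauss (-x * gauss x) x := by
  unfold gauss
  have h1 : HasDerivAt (fun x : ℝ => -x ^ 2 / 2) (-x) x := by
    have := ((hasDerivAt_pow 2 x).neg).div_const 2
    refine this.congr_deriv ?_
    norm_num
    ring
  have := (h1.exp).div_const (Real.sqrt (2 * Real.pi))
  refine this.congr_deriv ?_
  ring

lemma gauss_continuous : Continuous gauss := by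
  unfold gauss
  fun_prop

lemma gauss_integrable : Integrable gauss := by
  have h := (integrable_exp_neg_mul_sq (b := 1 / 2) (by norm_num)).div_const
    (Real.sqrt (2 * Real.pi))
  refine h.congr (Filter.Eventually.of_forall fun x => ?_)
  simp only [gauss]
  congr 2
  ring

lemma normCdf_hasDerivAt (x : ℝ) : HasDerivAt normCdf (gauss x) x := by
  have h : normCdf = fun y => normCdf 0 + ∫ u in (0 : ℝ)..y, gauss u := by
    funext y
    have := intervalIntegral.integral_Iic_sub_Iic (μ := volume) (f := gauss) (a := 0) (b := y)
      gauss_integrable.integrableOn gauss_integrable.integrableOn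
    unfold normCdf
    linarith
  rw [h]
  exact (intervalIntegral.integral_hasDerivAt_right
    (gauss_integrable.intervalIntegrable)
    (gauss_continuous.stronglyMeasurableAtFilter _ _)
    gauss_continuous.continuousAt).const_add _

lemma gauss_dminus (k w : ℝ) (hw : 0 < w) :
    gauss (dminus k w) = Real.exp (-k) * gauss (dplus k w) := by
  have hs : Real.sqrt w ≠ 0 := (Real.sqrt_pos.2 hw).ne'
  unfold gauss dminus dplus
  rw [← mul_div_assoc, ← Real.exp_add]
  congr 2
  field_simp
  ring

lemma sqrtw_hasDerivAt (w : ℝ → ℝ) (hw1 : Differentiable ℝ w) (hwpos : ∀ k, 0 < w k) (k : ℝ) :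
    HasDerivAt (fun k => Real.sqrt (w k)) (deriv w k / (2 * Real.sqrt (w k))) k :=
  (hw1 k).hasDerivAt.sqrt (hwpos k).ne'

lemma dplus_hasDerivAt (w : ℝ → ℝ) (hw1 : Differentiable ℝ w) (hwpos : ∀ k, 0 < w k) (k : ℝ) :
    HasDerivAt (fun k => dplus k (w k))
      (-1 / Real.sqrt (w k) + k * (deriv w k / (2 * Real.sqrt (w k))) / Real.sqrt (w k) ^ 2
        + deriv w k / (2 * Real.sqrt (w k)) / 2) k := by
  have hs : Real.sqrt (w k) ≠ 0 := (Real.sqrt_pos.2 (hwpos k)).ne'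
  have h := sqrtw_hasDerivAt w hw1 hwpos k
  refine (((hasDerivAt_id k).neg.div h hs).add (h.div_const 2)).congr_deriv ?_
  simp only [id, Pi.neg_apply]
  field_simp
  ring

lemma dminus_hasDerivAt (w : ℝ → ℝ) (hw1 : Differentiable ℝ w) (hwpos : ∀ k, 0 < w k) (k : ℝ) :
    HasDerivAt (fun k => dminus k (w k))
      (-1 / Real.sqrt (w k) + k * (deriv w k / (2 * Real.sqrt (w k))) / Real.sqrt (w k) ^ 2
        - deriv w k / (2 * Real.sqrt (w k)) / 2) k := by
  have hs : Real.sqrt (w k) ≠ 0 := (Real.sqrt_pos.2 (hwpos k)).ne'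
  have h := sqrtw_hasDerivAt w hw1 hwpos k
  refine (((hasDerivAt_id k).neg.div h hs).sub (h.div_const 2)).congr_deriv ?_
  simp only [id, Pi.neg_apply]
  field_simp
  ring

lemma logK_hasDerivAt (F : ℝ) (hF : 0 < F) (K : ℝ) (hK : 0 < K) :
    HasDerivAt (fun K : ℝ => Real.log (K / F)) (1 / K) K := by
  refine (((hasDerivAt_id K).div_const F).log (div_pos hK hF).ne').congr_deriv ?_
  simp only [id]
  field_simp

lemma call_hasDerivAt (F : ℝ) (hF : 0 < F)
    (w : ℝ → ℝ) (hw1 : Differentiable ℝ w) (hwpos : ∀ k, 0 < w k) (K : ℝ) (hK : 0 < K) :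
    HasDerivAt (fun K : ℝ => CBS F (Real.log (K / F)) (w (Real.log (K / F))))
      ((fun K : ℝ => (fun k => F * (gauss (dplus k (w k)) *
        (deriv w k / (2 * Real.sqrt (w k))))) (Real.log (K / F)) / K
        - (fun k => normCdf (dminus k (w k))) (Real.log (K / F))) K) K := by
  have hl := logK_hasDerivAt F hF K hK
  have hE : Real.exp (Real.log (K / F)) = K / F := Real.exp_log (div_pos hK hF)
  generalize hk : Real.log (K / F) = k at *
  have hp := (normCdf_hasDerivAt _).comp k (dplus_hasDerivAt w hw1 hwpos k)
  have hm := (normCdf_hasDerivAt _).comp k (dminus_hasDerivAt w hw1 hwpos k)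
  have hc := (hp.sub ((Real.hasDerivAt_exp k).mul hm)).const_mul F
  rw [← hk] at hc
  have := HasDerivAt.comp (h := fun K : ℝ => Real.log (K / F)) K hc hl
  refine this.congr_deriv ?_
  simp only [hk, Function.comp]
  rw [gauss_dminus _ _ (hwpos k), Real.exp_neg, hE]
  have hs : Real.sqrt (w k) ≠ 0 := (Real.sqrt_pos.2 (hwpos k)).ne'
  field_simp
  ring

lemma call_hasDerivAt2 (F : ℝ) (hF : 0 < F)
    (w : ℝ → ℝ) (hw1 : Differentiable ℝ w) (hw2 : Differentiable ℝ (deriv w))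
    (hwpos : ∀ k, 0 < w k) (K : ℝ) (hK : 0 < K) :
    HasDerivAt (fun K : ℝ => (fun k => F * (gauss (dplus k (w k)) *
        (deriv w k / (2 * Real.sqrt (w k))))) (Real.log (K / F)) / K
        - (fun k => normCdf (dminus k (w k))) (Real.log (K / F)))
      (F * gauss (dplus (Real.log (K / F)) (w (Real.log (K / F))))
            / (K ^ 2 * Real.sqrt (w (Real.log (K / F)))) *
          ((1 - Real.log (K / F) * deriv w (Real.log (K / F)) / (2 * w (Real.log (K / F)))) ^ 2
            - (deriv w (Real.log (K / F))) ^ 2 / 4 * (1 / w (Real.log (K / F)) + 1 / 4)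
            + deriv (deriv w) (Real.log (K / F)) / 2)) K := by
  have hl := logK_hasDerivAt F hF K hK
  have hE : Real.exp (Real.log (K / F)) = K / F := Real.exp_log (div_pos hK hF)
  generalize hk : Real.log (K / F) = k at *
  have hs : Real.sqrt (w k) ≠ 0 := (Real.sqrt_pos.2 (hwpos k)).ne'
  have hp := (gauss_hasDerivAt _).comp k (dplus_hasDerivAt w hw1 hwpos k)
  have hm := (normCdf_hasDerivAt _).comp k (dminus_hasDerivAt w hw1 hwpos k)
  have hq := (hw2 k).hasDerivAt.div ((sqrtw_hasDerivAt w hw1 hwpos k).const_mul 2)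
    (mul_ne_zero two_ne_zero hs)
  have ha := (hp.mul hq).const_mul F
  rw [← hk] at ha hm
  have ha' := (HasDerivAt.comp (h := fun K : ℝ => Real.log (K / F)) K ha hl).div (hasDerivAt_id K) hK.ne'
  have hm' := HasDerivAt.comp (h := fun K : ℝ => Real.log (K / F)) K hm hl
  refine (ha'.sub hm').congr_deriv ?_
  simp only [hk, Function.comp, id, Pi.mul_apply, Pi.div_apply]
  rw [gauss_dminus _ _ (hwpos k), Real.exp_neg, hE]
  have hsq : w k = Real.sqrt (w k) ^ 2 := (Real.sq_sqrt (hwpos k).le).symm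
  generalize gauss (dplus k (w k)) = G
  unfold dplus
  generalize Real.sqrt (w k) = s at *
  rw [hsq]
  field_simp
  ring

/-- Durrleman/Gatheral–Jacquier factorization of strike-convexity:
`Ĉ″(K) = (F·φ(d₊(k,w(k)))/(K²·√(w(k))))·g(k)` with `k = log(K/F)`. -/
theorem durrleman_strike_convexity_factorization (F : ℝ) (hF : 0 < F)
    (w : ℝ → ℝ) (hw1 : Differentiable ℝ w) (hw2 : Differentiable ℝ (deriv w))
    (hwpos : ∀ k, 0 < w k) :
    (∀ K : ℝ, 0 < K →
      DifferentiableAt ℝ (fun K : ℝ => CBS F (Real.log (K / F)) (w (Real.log (K / F)))) K) ∧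
    (∀ K : ℝ, 0 < K →
      DifferentiableAt ℝ
        (deriv (fun K : ℝ => CBS F (Real.log (K / F)) (w (Real.log (K / F))))) K) ∧
    ∀ K : ℝ, 0 < K →
      deriv (deriv (fun K : ℝ => CBS F (Real.log (K / F)) (w (Real.log (K / F))))) K
        = F * gauss (dplus (Real.log (K / F)) (w (Real.log (K / F))))
            / (K ^ 2 * Real.sqrt (w (Real.log (K / F)))) *
          ((1 - Real.log (K / F) * deriv w (Real.log (K / F)) / (2 * w (Real.log (K / F)))) ^ 2
            - (deriv w (Real.log (K / F))) ^ 2 / 4 * (1 / w (Real.log (K / F)) + 1 / 4)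
            + deriv (deriv w) (Real.log (K / F)) / 2) := by
  have h1 := call_hasDerivAt F hF w hw1 hwpos
  have h2 : ∀ K : ℝ, 0 < K → _ := fun K hK =>
    (call_hasDerivAt2 F hF w hw1 hw2 hwpos K hK).congr_of_eventuallyEq
      (Filter.eventuallyEq_of_mem (Ioi_mem_nhds hK) fun x hx => (h1 x hx).deriv)
  exact ⟨fun K hK => (h1 K hK).differentiableAt, fun K hK => (h2 K hK).differentiableAt,
    fun K hK => (h2 K hK).deriv⟩
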